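/- Conversely, if a nonempty closed subset M of ℝ^ν has infinite reach (every point of ℝ^ν has a unique nearest point in M), then M is convex. -/

import Mathlib

/-!
Let `d` be the distance to `M`. Nearest points depend continuously on the point, so at a maximiser
`z` of `d` on a convex set the vector from the point of `M` nearest to `z` to `z` is an outer
normal. On the closed ball of radius `ρ < d x` about `x` this puts `x` on the segment from `z` to
its nearest point, whence `d z = d x + ρ`. Iterating, `d` grows at unit speed arbitrarily far away
from any `x ∉ M`: the complement of `M` contains balls of arbitrarily large radius in which `x` lies
at the fixed depth `d x`. If `x` were on a chord of `M`, Stewart's theorem would bound their radii.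
-/

open Filter Metric Topology

section MetricProjection

variable {X : Type*} [PseudoMetricSpace X] {M : Set X} {z p : X}

/-- The set-valued metric projection onto `M`: the points of `M` nearest to `x`. For empty `M`
it is empty, although `Metric.infDist x ∅ = 0`. -/
def metricProjection (M : Set X) (x : X) : Set X :=
  {y | y ∈ M ∧ dist x y = infDist x M}

theorem tendsto_dist_of_mem_metricProjection {ι : Type*} {l : Filter ι} {w q : ι → X}
    (hw : Tendsto w l (𝓝 z)) (hq : ∀ i, q i ∈ metricProjection M (w i)) :
    Tendsto (fun i => dist z (q i)) l (𝓝 (infDist z M)) := by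
  have hdist : Tendsto (fun i => dist z (w i)) l (𝓝 0) := by
    simpa only [dist_self] using (tendsto_const_nhds (x := z)).dist hw
  have hinf : Tendsto (fun i => infDist (w i) M) l (𝓝 (infDist z M)) :=
    ((continuous_infDist_pt M).tendsto z).comp hw
  refine tendsto_of_tendsto_of_tendsto_of_le_of_le tendsto_const_nhds
    (by simpa only [zero_add] using hdist.add hinf)
    (fun i => infDist_le_dist_of_mem (hq i).1) fun i => ?_
  rw [← (hq i).2]
  exact dist_triangle z (w i) (q i)

variable [ProperSpace X]

theorem metricProjection_nonempty (hM : IsClosed M) (hne : M.Nonempty) (x : X) :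
    (metricProjection M x).Nonempty :=
  let ⟨y, hy, hxy⟩ := hM.exists_infDist_eq_dist hne x
  ⟨y, hy, hxy.symm⟩

theorem tendsto_of_tendsto_dist_infDist (hM : IsClosed M) (hp : metricProjection M z = {p})
    {ι : Type*} {l : Filter ι} {q : ι → X} (hq : ∀ᶠ i in l, q i ∈ M)
    (hdist : Tendsto (fun i => dist z (q i)) l (𝓝 (infDist z M))) :
    Tendsto q l (𝓝 p) := by
  have hK : IsCompact (M ∩ closedBall z (infDist z M + 1)) :=
    (isCompact_closedBall _ _).inter_left hM
  refine hK.tendsto_nhds_of_unique_mapClusterPt ?_ fun y hy hcluster => ?_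
  · filter_upwards [hq, hdist.eventually_le_const (lt_add_one _)] with i hqi hi
    exact ⟨hqi, mem_closedBall'.2 hi⟩
  · have hcluster' : MapClusterPt (dist z y) l (fun i => dist z (q i)) :=
      hcluster.continuousAt_comp (continuous_const.dist continuous_id).continuousAt
    have hzy : dist z y = infDist z M := eq_of_nhds_neBot (ClusterPt.mono hcluster' hdist)
    have hy' : y ∈ metricProjection M z := ⟨hy.1, hzy⟩
    rwa [hp, Set.mem_singleton_iff] at hy'

end MetricProjection

section InnerProductSpace

variable {E : Type*} [NormedAddCommGroup E] [InnerProductSpace ℝ E] {M : Set E} {x z p : E}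

theorem inner_sub_nonpos_of_infDist_le {w q : E} (hq : q ∈ metricProjection M w)
    (hwz : infDist w M ≤ infDist z M) : inner ℝ (w - z) (z - q) ≤ 0 := by
  have hle : ‖w - q‖ ≤ ‖z - q‖ := by
    rw [← dist_eq_norm, ← dist_eq_norm, hq.2]
    exact hwz.trans (infDist_le_dist_of_mem hq.1)
  have hsq : ‖w - q‖ ^ 2 = ‖w - z‖ ^ 2 + 2 * inner ℝ (w - z) (z - q) + ‖z - q‖ ^ 2 := by
    rw [← norm_add_sq_real, sub_add_sub_cancel]
  have := pow_le_pow_left₀ (norm_nonneg _) hle 2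
  linarith [sq_nonneg ‖w - z‖]

/-- Stewart's theorem in barycentric coordinates. -/
theorem norm_sub_smul_add_smul_sq {s t : ℝ} (hst : s + t = 1) (a b z : E) :
    ‖z - (s • a + t • b)‖ ^ 2 + s * t * ‖a - b‖ ^ 2 = s * ‖z - a‖ ^ 2 + t * ‖z - b‖ ^ 2 := by
  have hcomb : z - (s • a + t • b) = s • (z - a) + t • (z - b) := by
    linear_combination (norm := module) (-hst) • z
  have hdiff : a - b = (z - b) - (z - a) := by abel
  rw [hcomb, hdiff, norm_add_sq_real, norm_sub_sq_real, norm_smul, norm_smul,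
    real_inner_smul_left, real_inner_smul_right, mul_pow, mul_pow, Real.norm_eq_abs,
    Real.norm_eq_abs, sq_abs, sq_abs, real_inner_comm (z - a) (z - b)]
  obtain rfl : t = 1 - s := by linarith
  ring

theorem infDist_sq_le_norm_sub_smul_add_smul_sq {a b : E} (ha : a ∈ M) (hb : b ∈ M) {s t : ℝ}
    (hs : 0 ≤ s) (ht : 0 ≤ t) (hst : s + t = 1) (z : E) :
    infDist z M ^ 2 ≤ ‖z - (s • a + t • b)‖ ^ 2 + s * t * ‖a - b‖ ^ 2 := by
  have hle {y : E} (hy : y ∈ M) : infDist z M ^ 2 ≤ ‖z - y‖ ^ 2 := by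
    rw [← dist_eq_norm]
    exact pow_le_pow_left₀ infDist_nonneg (infDist_le_dist_of_mem hy) 2
  calc infDist z M ^ 2 = s * infDist z M ^ 2 + t * infDist z M ^ 2 := by
        rw [← add_mul, hst, one_mul]
    _ ≤ s * ‖z - a‖ ^ 2 + t * ‖z - b‖ ^ 2 :=
        add_le_add (mul_le_mul_of_nonneg_left (hle ha) hs) (mul_le_mul_of_nonneg_left (hle hb) ht)
    _ = _ := (norm_sub_smul_add_smul_sq hst a b z).symm

variable [ProperSpace E]

theorem inner_sub_nonpos_of_isMaxOn_infDist (hM : IsClosed M) (hp : metricProjection M z = {p})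
    {C : Set E} (hC : StarConvex ℝ z C) (hmax : IsMaxOn (infDist · M) C z) {w : E} (hw : w ∈ C) :
    inner ℝ (w - z) (z - p) ≤ 0 := by
  have hpM : p ∈ M := (hp.ge rfl).1
  choose q hq using fun ε : ℝ => metricProjection_nonempty hM ⟨p, hpM⟩ (z + ε • (w - z))
  have hpath : Tendsto (fun ε : ℝ => z + ε • (w - z)) (𝓝[>] 0) (𝓝 z) := by
    have hcont : Continuous fun ε : ℝ => z + ε • (w - z) := by fun_prop
    simpa only [zero_smul, add_zero] using (hcont.tendsto 0).mono_left nhdsWithin_le_nhds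
  have hqp : Tendsto q (𝓝[>] 0) (𝓝 p) :=
    tendsto_of_tendsto_dist_infDist hM hp (.of_forall fun ε => (hq ε).1)
      (tendsto_dist_of_mem_metricProjection hpath hq)
  refine le_of_tendsto (tendsto_const_nhds.inner (tendsto_const_nhds.sub hqp)) ?_
  filter_upwards [Ioc_mem_nhdsGT (zero_lt_one' ℝ)] with ε ⟨hε, hε_le⟩
  have hinner := inner_sub_nonpos_of_infDist_le (hq ε)
    (hmax (hC.add_smul_sub_mem hw hε.le hε_le))
  rw [add_sub_cancel_left, real_inner_smul_left] at hinner
  exact nonpos_of_mul_nonpos_right hinner hε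

theorem mul_norm_le_inner_of_isMaxOn_infDist_closedBall (hM : IsClosed M)
    (hp : metricProjection M z = {p}) {ρ : ℝ} (hz : z ∈ closedBall x ρ)
    (hmax : IsMaxOn (infDist · M) (closedBall x ρ) z) :
    ρ * ‖z - p‖ ≤ inner ℝ (z - x) (z - p) := by
  have hρ : 0 ≤ ρ := nonempty_closedBall.1 ⟨z, hz⟩
  -- Test against the point of the ball farthest in direction `z - p` (the centre if `z = p`).
  have hunit : ‖(‖z - p‖⁻¹ • (z - p) : E)‖ ≤ 1 := by
    rw [norm_smul, norm_inv, norm_norm]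
    exact inv_mul_le_one
  have hw : x + ρ • ‖z - p‖⁻¹ • (z - p) ∈ closedBall x ρ := by
    rw [mem_closedBall_iff_norm, add_sub_cancel_left, norm_smul, Real.norm_of_nonneg hρ]
    exact mul_le_of_le_one_right hρ hunit
  have hinner := inner_sub_nonpos_of_isMaxOn_infDist hM hp
    ((convex_closedBall x ρ).starConvex hz) hmax hw
  have hsplit : x + ρ • ‖z - p‖⁻¹ • (z - p) - z = ρ • ‖z - p‖⁻¹ • (z - p) - (z - x) := by abel
  rw [hsplit, inner_sub_left, real_inner_smul_left, real_inner_smul_left,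
    real_inner_self_eq_norm_sq, pow_two, ← mul_assoc ‖z - p‖⁻¹, inv_mul_mul_self] at hinner
  linarith

theorem exists_mem_closedBall_infDist_add_le (hM : IsClosed M)
    (huniq : ∀ y, (metricProjection M y).Subsingleton) {ρ : ℝ} (hρ : 0 ≤ ρ)
    (hρx : ρ < infDist x M) : ∃ z ∈ closedBall x ρ, infDist x M + ρ ≤ infDist z M := by
  have hne : M.Nonempty := by
    rw [Set.nonempty_iff_ne_empty]
    rintro rfl
    rw [infDist_empty] at hρx
    exact hρx.not_ge hρ
  obtain ⟨z, hz, hmax⟩ := (isCompact_closedBall x ρ).exists_isMaxOn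
    (nonempty_closedBall.2 hρ) (continuous_infDist_pt M).continuousOn
  obtain ⟨p, hp⟩ := metricProjection_nonempty hM hne z
  have hzp : ‖z - p‖ = infDist z M := by rw [← dist_eq_norm, hp.2]
  have hρz : ρ < infDist z M := hρx.trans_le (hmax (mem_closedBall_self hρ))
  have hinner : ρ * ‖z - p‖ ≤ inner ℝ (z - x) (z - p) :=
    mul_norm_le_inner_of_isMaxOn_infDist_closedBall hM
      ((huniq z).eq_singleton_of_mem hp) hz hmax
  have hxp_sq : ‖x - p‖ ^ 2 ≤ (infDist z M - ρ) ^ 2 := by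
    have hzx : ‖z - x‖ ^ 2 ≤ ρ ^ 2 :=
      pow_le_pow_left₀ (norm_nonneg _) (mem_closedBall_iff_norm.1 hz) 2
    rw [← sub_sub_sub_cancel_left p x z, norm_sub_sq_real, real_inner_comm, ← hzp]
    linarith
  have hxp : ‖x - p‖ ≤ infDist z M - ρ := le_of_sq_le_sq hxp_sq (sub_nonneg.2 hρz.le)
  have hx : infDist x M ≤ ‖x - p‖ := by
    rw [← dist_eq_norm]
    exact infDist_le_dist_of_mem hp.1
  exact ⟨z, hz, by linarith⟩

theorem exists_mem_closedBall_infDist_add_nat_mul_le (hM : IsClosed M)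
    (huniq : ∀ y, (metricProjection M y).Subsingleton) {ρ : ℝ} (hρ : 0 ≤ ρ)
    (hρx : ρ < infDist x M) (n : ℕ) :
    ∃ z ∈ closedBall x (n * ρ), infDist x M + n * ρ ≤ infDist z M := by
  induction n with
  | zero => exact ⟨x, by simp⟩
  | succ n ih =>
    obtain ⟨y, hy, hxy⟩ := ih
    have hρy : ρ < infDist y M := by linarith [mul_nonneg n.cast_nonneg hρ]
    obtain ⟨z, hz, hyz⟩ := exists_mem_closedBall_infDist_add_le hM huniq hρ hρy
    rw [mem_closedBall] at hy hz
    refine ⟨z, ?_, ?_⟩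
    · rw [mem_closedBall]
      push_cast
      linarith [dist_triangle z y x]
    · push_cast
      linarith

theorem stmt_7_general (hM : IsClosed M) (huniq : ∀ x, (metricProjection M x).Subsingleton) :
    Convex ℝ M := by
  intro a ha b hb s t hs ht hst
  by_contra hx
  set x := s • a + t • b
  set d := infDist x M
  have hd : 0 < d := (hM.notMem_iff_infDist_pos ⟨a, ha⟩).1 hx
  obtain ⟨n, hn⟩ : ∃ n : ℕ, s * t * ‖a - b‖ ^ 2 < n * (d * d) := by
    simpa only [nsmul_eq_mul] using exists_lt_nsmul (mul_pos hd hd) (s * t * ‖a - b‖ ^ 2)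
  obtain ⟨z, hz, hdz⟩ := exists_mem_closedBall_infDist_add_nat_mul_le hM huniq
    (half_pos hd).le (half_lt_self hd) n
  rw [mem_closedBall_iff_norm] at hz
  have hcontra : (d + n * (d / 2)) ^ 2 < (d + n * (d / 2)) ^ 2 :=
    calc (d + n * (d / 2)) ^ 2 ≤ infDist z M ^ 2 := by gcongr
      _ ≤ ‖z - x‖ ^ 2 + s * t * ‖a - b‖ ^ 2 :=
        infDist_sq_le_norm_sub_smul_add_smul_sq ha hb hs ht hst z
      _ < (n * (d / 2)) ^ 2 + n * (d * d) :=
        add_lt_add_of_le_of_lt (pow_le_pow_left₀ (norm_nonneg _) hz 2) hn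
      _ ≤ (d + n * (d / 2)) ^ 2 := by linarith [sq_nonneg d]
  exact hcontra.false

end InnerProductSpace

/-- Motzkin's theorem: if a nonempty closed subset `M` of `ℝ^ν` has infinite reach
(every point of `ℝ^ν` has a unique nearest point in `M`), then `M` is convex. -/
theorem stmt_7 (ν : ℕ) (M : Set (EuclideanSpace ℝ (Fin ν)))
    (hne : M.Nonempty) (hclosed : IsClosed M)
    (hcheby : ∀ x : EuclideanSpace ℝ (Fin ν),
      ∃! y : EuclideanSpace ℝ (Fin ν), y ∈ M ∧ dist x y = Metric.infDist x M) :
    Convex ℝ M :=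
  stmt_7_general hclosed fun x _ hy _ hz => (hcheby x).unique hy hz
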